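/- arXiv:1304.6655 — 4 statements merged into one kernel-verified Lean document; each statement's English description precedes it below -/
import Mathlib

section
/- Fix p ∈ (0,1) and x ∈ ℝⁿ. Then lim_{ε→0⁺} ( n − F_ε(x)/log ε ) = ‖x‖₀, where F_ε(x) = Σᵢ [ log(|xᵢ|+ε) + (|xᵢ|+ε)^p ]. -/
/-!
Divide `F_ε(x)` by `log ε → -∞` one coordinate at a time. Every term that stays bounded as `ε → 0⁺`
vanishes in the limit: the power term always does, and so does `log (|xᵢ| + ε)` when `xᵢ ≠ 0`. When
`xᵢ = 0` the logarithmic quotient is `log ε / log ε = 1`. Hence `F_ε(x) / log ε` counts the zero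
coordinates of `x`.
-/

open Filter Topology

section

variable {g : ℝ → ℝ} {a : ℝ}

theorem tendsto_comp_const_add_div_log_nhdsGT_zero (hg : ContinuousAt g a) :
    Tendsto (fun ε ↦ g (a + ε) / Real.log ε) (𝓝[>] 0) (𝓝 0) := by
  have shift : Tendsto (fun ε ↦ a + ε) (𝓝[>] 0) (𝓝 a) :=
    ((continuous_const_add a).tendsto' 0 a (add_zero a)).mono_left nhdsWithin_le_nhds
  exact (hg.tendsto.comp shift).div_atBot Real.tendsto_log_nhdsGT_zero

theorem tendsto_log_div_log_nhdsGT_zero :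
    Tendsto (fun ε ↦ Real.log ε / Real.log ε) (𝓝[>] 0) (𝓝 1) := by
  refine tendsto_const_nhds.congr' ?_
  filter_upwards [Real.tendsto_log_nhdsGT_zero.eventually_ne_atBot 0] with ε log_ne_zero
  exact (div_self log_ne_zero).symm

theorem tendsto_log_const_add_div_log_nhdsGT_zero (a : ℝ) :
    Tendsto (fun ε ↦ Real.log (a + ε) / Real.log ε) (𝓝[>] 0) (𝓝 (if a = 0 then 1 else 0)) := by
  split_ifs with ha
  · simpa only [ha, zero_add] using tendsto_log_div_log_nhdsGT_zero
  · exact tendsto_comp_const_add_div_log_nhdsGT_zero (Real.continuousAt_log ha)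

theorem tendsto_log_const_add_add_comp_div_log_nhdsGT_zero (hg : ContinuousAt g a) :
    Tendsto (fun ε ↦ (Real.log (a + ε) + g (a + ε)) / Real.log ε) (𝓝[>] 0)
      (𝓝 (if a = 0 then 1 else 0)) := by
  simpa only [add_div, add_zero] using
    (tendsto_log_const_add_div_log_nhdsGT_zero a).add
      (tendsto_comp_const_add_div_log_nhdsGT_zero hg)

end

theorem merit_log_rpow_tendsto_l0norm_general {ι : Type*} [Fintype ι] {g : ℝ → ℝ} (x : ι → ℝ)
    (hg : ∀ i, ContinuousAt g |x i|) :
    Tendsto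
      (fun ε ↦ (Fintype.card ι : ℝ) -
        (∑ i, (Real.log (|x i| + ε) + g (|x i| + ε))) / Real.log ε)
      (𝓝[>] 0) (𝓝 ((Finset.univ.filter (fun i ↦ x i ≠ 0)).card : ℝ)) := by
  have tendsto_card_zeros :
      Tendsto (fun ε ↦ (∑ i, (Real.log (|x i| + ε) + g (|x i| + ε))) / Real.log ε)
        (𝓝[>] 0) (𝓝 ((Finset.univ.filter (fun i ↦ x i = 0)).card : ℝ)) := by
    simpa only [Finset.sum_div, abs_eq_zero, Finset.sum_boole] using
      tendsto_finsetSum Finset.univ fun i _ ↦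
        tendsto_log_const_add_add_comp_div_log_nhdsGT_zero (hg i)
  have card_zeros_add_card_support :
      ((Finset.univ.filter (fun i ↦ x i = 0)).card : ℝ) +
        (Finset.univ.filter (fun i ↦ x i ≠ 0)).card = Fintype.card ι :=
    mod_cast Finset.card_filter_add_card_filter_not (s := Finset.univ) (fun i ↦ x i = 0)
  rw [eq_sub_of_add_eq' card_zeros_add_card_support]
  exact tendsto_card_zeros.const_sub _

/-- For fixed `p ∈ (0,1)` and `x ∈ ℝⁿ`,
`n − F_ε(x) / log ε → ‖x‖₀` as `ε → 0⁺`, where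
`F_ε(x) = ∑ i, (log (|x i| + ε) + (|x i| + ε) ^ p)`. -/
theorem merit_log_rpow_tendsto_l0norm (n : ℕ) (p : ℝ) (hp : p ∈ Set.Ioo (0 : ℝ) 1)
    (x : Fin n → ℝ) :
    Filter.Tendsto
      (fun ε : ℝ =>
        (n : ℝ) -
          (∑ i, (Real.log (|x i| + ε) + (|x i| + ε) ^ p)) / Real.log ε)
      (nhdsWithin 0 (Set.Ioi 0))
      (nhds ((Finset.univ.filter (fun i => x i ≠ 0)).card : ℝ)) := by
  simpa only [Fintype.card_fin] using
    merit_log_rpow_tendsto_l0norm_general x fun i ↦ Real.continuousAt_rpow_const _ p (.inr hp.1.le)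
end

section
/- Fix p ∈ (0,1) and x ∈ ℝⁿ such that |xᵢ| + |xᵢ|^p ≠ 1 for every index i with xᵢ ≠ 0. Then lim_{ε→0⁺} Σᵢ log(|log(|xᵢ| + ε + (|xᵢ|+ε)^p)|) / log(−log ε) = n − ‖x‖₀. -/
/-!
Since `Real.log y = Real.log |y|`, the absolute value and the sign inside the outer logarithms
are harmless: the claim concerns `log (log (a + ε + (a + ε) ^ p)) / log (log ε)` with `a = |x i|`.
For `a > 0` the numerator converges while the denominator diverges, so the quotient tends to `0`.
For `a = 0` the smaller of the two exponents dominates, so `log (ε + ε ^ p)` is asymptotic to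
`min 1 p * log ε`; the nonzero factor `min 1 p` is invisible after one more logarithm, and the
quotient tends to `1`. The sum of the limits therefore counts the zero entries of `x`.
-/

open Filter Topology Finset

theorem tendsto_log_div_log_of_tendsto_div {α : Type*} {l : Filter α} {f g : α → ℝ} {c : ℝ}
    (hc : c ≠ 0) (hfg : Tendsto (fun a => f a / g a) l (𝓝 c))
    (hg : Tendsto (fun a => Real.log (g a)) l atTop) :
    Tendsto (fun a => Real.log (f a) / Real.log (g a)) l (𝓝 1) := by
  have correction : Tendsto (fun a => 1 + Real.log (f a / g a) / Real.log (g a)) l (𝓝 1) := by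
    simpa only [add_zero] using ((hfg.log hc).div_atTop hg).const_add 1
  refine correction.congr' ?_
  filter_upwards [hfg.eventually_ne hc, hg.eventually_ne_atTop 0] with a hquot hlog
  obtain ⟨hfa, hga⟩ := div_ne_zero_iff.mp hquot
  rw [Real.log_div hfa hga, sub_div, div_self hlog, add_sub_cancel]

theorem tendsto_log_log_nhdsGT_zero :
    Tendsto (fun ε : ℝ => Real.log (Real.log ε)) (𝓝[>] 0) atTop := by
  simpa only [Function.comp_def, Real.log_abs] using
    Real.tendsto_log_atTop.comp (tendsto_abs_atBot_atTop.comp Real.tendsto_log_nhdsGT_zero)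

section PowerSum

variable {p q ε : ℝ}

theorem min_mul_log_le_log_rpow_add_rpow (hε : 0 < ε) :
    min p q * Real.log ε ≤ Real.log (ε ^ p + ε ^ q) := by
  rw [← Real.log_rpow hε]
  refine Real.log_le_log (by positivity) ?_
  rcases min_choice p q with h | h <;> rw [h]
  · exact le_add_of_nonneg_right (by positivity)
  · exact le_add_of_nonneg_left (by positivity)

theorem log_rpow_add_rpow_le (hε : 0 < ε) (hε1 : ε ≤ 1) :
    Real.log (ε ^ p + ε ^ q) ≤ Real.log 2 + min p q * Real.log ε := by
  rw [← Real.log_rpow hε, ← Real.log_mul two_ne_zero (by positivity), two_mul]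
  refine Real.log_le_log (by positivity) (add_le_add ?_ ?_)
  · exact Real.rpow_le_rpow_of_exponent_ge hε hε1 (min_le_left p q)
  · exact Real.rpow_le_rpow_of_exponent_ge hε hε1 (min_le_right p q)

theorem tendsto_log_rpow_add_rpow_div_log (p q : ℝ) :
    Tendsto (fun ε : ℝ => Real.log (ε ^ p + ε ^ q) / Real.log ε) (𝓝[>] 0) (𝓝 (min p q)) := by
  have lower : Tendsto (fun ε : ℝ => Real.log 2 / Real.log ε + min p q) (𝓝[>] 0)
      (𝓝 (min p q)) := by
    simpa only [zero_add] using
      (Real.tendsto_log_nhdsGT_zero.const_div_atBot (Real.log 2)).add_const (min p q)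
  have near_zero : ∀ᶠ ε : ℝ in 𝓝[>] 0, ε ∈ Set.Ioo 0 1 := Ioo_mem_nhdsGT one_pos
  refine tendsto_of_tendsto_of_tendsto_of_le_of_le' lower tendsto_const_nhds ?_ ?_
  · filter_upwards [near_zero] with ε ⟨hε, hε1⟩
    have hlog : Real.log ε < 0 := Real.log_neg hε hε1
    rw [le_div_iff_of_neg hlog, add_mul, div_mul_cancel₀ _ hlog.ne]
    exact log_rpow_add_rpow_le hε hε1.le
  · filter_upwards [near_zero] with ε ⟨hε, hε1⟩
    rw [div_le_iff_of_neg (Real.log_neg hε hε1)]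
    exact min_mul_log_le_log_rpow_add_rpow hε

end PowerSum

section MeritSummand

variable {p : ℝ}

theorem tendsto_log_log_add_rpow_div_log_log (hp : p ≠ 0) :
    Tendsto (fun ε : ℝ => Real.log (Real.log (ε + ε ^ p)) / Real.log (Real.log ε))
      (𝓝[>] 0) (𝓝 1) := by
  have min_ne_zero : min 1 p ≠ 0 := by
    rcases min_choice 1 p with h | h <;> rw [h]
    exacts [one_ne_zero, hp]
  simpa only [Real.rpow_one] using tendsto_log_div_log_of_tendsto_div min_ne_zero
    (tendsto_log_rpow_add_rpow_div_log 1 p) tendsto_log_log_nhdsGT_zero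

theorem tendsto_log_log_shift_add_rpow_div_log_log {a : ℝ} (ha : 0 < a) (hap : a + a ^ p ≠ 1) :
    Tendsto
      (fun ε : ℝ => Real.log (Real.log (a + ε + (a + ε) ^ p)) / Real.log (Real.log ε))
      (𝓝[>] 0) (𝓝 0) := by
  have shift : Tendsto (fun ε : ℝ => a + ε) (𝓝[>] 0) (𝓝 a) :=
    ((continuous_const_add a).tendsto' 0 a (add_zero a)).mono_left nhdsWithin_le_nhds
  have hpos : 0 < a + a ^ p := by positivity
  have log_ne_zero : Real.log (a + a ^ p) ≠ 0 := Real.log_ne_zero_of_pos_of_ne_one hpos hap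
  have inner_log : Tendsto (fun ε : ℝ => Real.log (a + ε + (a + ε) ^ p)) (𝓝[>] 0)
      (𝓝 (Real.log (a + a ^ p))) :=
    (shift.add (shift.rpow_const (Or.inl ha.ne'))).log hpos.ne'
  exact (inner_log.log log_ne_zero).div_atTop tendsto_log_log_nhdsGT_zero

end MeritSummand

theorem loglog_merit_tendsto_general {ι : Type*} [Fintype ι] {p : ℝ} (hp : p ≠ 0)
    {x : ι → ℝ} (hx : ∀ i, x i ≠ 0 → |x i| + |x i| ^ p ≠ 1) :
    Tendsto
      (fun ε : ℝ =>
        (∑ i, Real.log |Real.log (|x i| + ε + (|x i| + ε) ^ p)|) / Real.log (-Real.log ε))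
      (𝓝[>] 0) (𝓝 ((Fintype.card ι : ℝ) - #{i | x i ≠ 0})) := by
  have count_zeros : (Fintype.card ι : ℝ) - #{i | x i ≠ 0} = ∑ i, if x i = 0 then 1 else 0 := by
    rw [sum_boole, sub_eq_iff_eq_add, ← Nat.cast_add, card_filter_add_card_filter_not, card_univ]
  simp only [count_zeros, Real.log_abs, Real.log_neg_eq_log, sum_div]
  refine tendsto_finsetSum _ fun i _ => ?_
  split_ifs with hi
  · simpa only [hi, abs_zero, zero_add] using tendsto_log_log_add_rpow_div_log_log hp
  · exact tendsto_log_log_shift_add_rpow_div_log_log (abs_pos.mpr hi) (hx i hi)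

/-- For fixed `p ∈ (0,1)` and `x ∈ ℝⁿ` with `|x i| + |x i|^p ≠ 1` whenever
`x i ≠ 0`, the loglog merit function satisfies
`(∑ i, log |log (|x i| + ε + (|x i| + ε)^p)|) / log (-log ε) → n − ‖x‖₀`
as `ε → 0⁺`. -/
theorem loglog_merit_tendsto (n : ℕ) (p : ℝ) (hp : p ∈ Set.Ioo (0 : ℝ) 1)
    (x : Fin n → ℝ) (hx : ∀ i, x i ≠ 0 → |x i| + |x i| ^ p ≠ 1) :
    Filter.Tendsto
      (fun ε : ℝ =>
        (∑ i, Real.log |Real.log (|x i| + ε + (|x i| + ε) ^ p)|) /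
          Real.log (-Real.log ε))
      (nhdsWithin 0 (Set.Ioi 0))
      (nhds ((n : ℝ) - (Finset.univ.filter (fun i => x i ≠ 0)).card)) := by
  simpa only [Fintype.card_fin] using loglog_merit_tendsto_general hp.1.ne' hx
end

section
/- Fix ε > 0 and p ∈ (0,1). The function g(t) = log(log(t + ε + (t+ε)^p)) is strictly concave on the convex set {t ∈ ℝ : t ≥ 0 and t + ε + (t+ε)^p > 1}. -/
open Set

section Composition

variable {𝕜 E β γ : Type*} [Semiring 𝕜] [PartialOrder 𝕜]
  [AddCommMonoid E] [SMul 𝕜 E]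
  [AddCommMonoid β] [PartialOrder β] [SMul 𝕜 β]
  [AddCommMonoid γ] [PartialOrder γ] [SMul 𝕜 γ]
  {s : Set E} {t : Set β} {f : E → β} {g : β → γ}

-- Unlike in `ConcaveOn.comp_strictConcaveOn`, the image `f '' s` need not be convex.
theorem strictConcaveOn_comp_of_mapsTo (hg : ConcaveOn 𝕜 t g) (hg_mono : StrictMonoOn g t)
    (hf : StrictConcaveOn 𝕜 s f) (hst : MapsTo f s t) :
    StrictConcaveOn 𝕜 s (g ∘ f) := by
  refine ⟨hf.1, fun x hx y hy hxy a b ha hb hab ↦ ?_⟩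
  have hxy_mem : a • x + b • y ∈ s := hf.1 hx hy ha.le hb.le hab
  have hfxy_mem : a • f x + b • f y ∈ t := hg.1 (hst hx) (hst hy) ha.le hb.le hab
  calc
    a • g (f x) + b • g (f y) ≤ g (a • f x + b • f y) :=
      hg.2 (hst hx) (hst hy) ha.le hb.le hab
    _ < g (f (a • x + b • y)) :=
      hg_mono hfxy_mem (hst hxy_mem) (hf.2 hx hy hxy ha hb hab)

end Composition

section Log

variable {E : Type*} [AddCommMonoid E] [Module ℝ E] {s : Set E} {f : E → ℝ}

theorem strictConcaveOn_log_comp (hf : StrictConcaveOn ℝ s f) (hf_pos : ∀ x ∈ s, 0 < f x) :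
    StrictConcaveOn ℝ s (fun x ↦ Real.log (f x)) :=
  strictConcaveOn_comp_of_mapsTo strictConcaveOn_log_Ioi.concaveOn Real.strictMonoOn_log hf hf_pos

theorem strictConcaveOn_log_log_comp (hf : StrictConcaveOn ℝ s f) :
    StrictConcaveOn ℝ {x ∈ s | 1 < f x} (fun x ↦ Real.log (Real.log (f x))) := by
  have hf_restrict : StrictConcaveOn ℝ {x ∈ s | 1 < f x} f :=
    hf.subset (sep_subset s _) (hf.concaveOn.convex_gt 1)
  have hlog : StrictConcaveOn ℝ {x ∈ s | 1 < f x} (fun x ↦ Real.log (f x)) :=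
    strictConcaveOn_log_comp hf_restrict fun _ hx ↦ zero_lt_one.trans hx.2
  exact strictConcaveOn_log_comp hlog fun _ hx ↦ Real.log_pos hx.2

end Log

theorem strictConcaveOn_id_add_rpow {p : ℝ} (hp₀ : 0 < p) (hp₁ : p < 1) :
    StrictConcaveOn ℝ (Ici 0) (fun x : ℝ ↦ x + x ^ p) :=
  (concaveOn_id (convex_Ici 0)).add_strictConcaveOn (Real.strictConcaveOn_rpow hp₀ hp₁)

/-- For fixed `ε > 0` and `p ∈ (0,1)`, the function
`t ↦ log (log (t + ε + (t+ε)^p))` is strictly concave on the convex set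
`{t : 0 ≤ t ∧ t + ε + (t+ε)^p > 1}`. -/
theorem strictConcaveOn_loglog (ε p : ℝ) (hε : 0 < ε)
    (hp : p ∈ Set.Ioo (0 : ℝ) 1) :
    StrictConcaveOn ℝ {t : ℝ | 0 ≤ t ∧ 1 < t + ε + (t + ε) ^ p}
      (fun t : ℝ => Real.log (Real.log (t + ε + (t + ε) ^ p))) := by
  have hshift : StrictConcaveOn ℝ ((fun t ↦ ε + t) ⁻¹' Ici 0) (fun t ↦ t + ε + (t + ε) ^ p) :=
    (strictConcaveOn_id_add_rpow hp.1 hp.2).translate_left ε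
  have hnonneg : Ici 0 ⊆ (fun t ↦ ε + t) ⁻¹' Ici 0 := fun _ ht ↦ add_nonneg hε.le ht
  exact strictConcaveOn_log_log_comp (hshift.subset hnonneg (convex_Ici 0))
end

section
/- Fix p, q ∈ (0,1) and x ∈ ℝⁿ. Then lim_{ε→0⁺} Σᵢ |log(|xᵢ| + ε + (|xᵢ|+ε)^q)|^p / |log(ε + ε^q)|^p = n − ‖x‖₀. -/
/-!
Put `φ t = |log (t + t ^ q)| ^ p`, so that the quotient is `∑ i, φ (|x i| + ε) / φ ε`. Since `φ`
blows up at `0⁺` and is continuous at every positive point, the `i`-th summand tends to `0` if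
`x i ≠ 0`, and it is eventually `1` if `x i = 0`.
-/

open Filter Topology

section Blowup

variable {φ : ℝ → ℝ} {a : ℝ}

theorem tendsto_add_div_nhdsGT_zero_of_continuousAt (hφ : Tendsto φ (𝓝[>] 0) atTop)
    (hcont : ContinuousAt φ a) : Tendsto (fun ε ↦ φ (a + ε) / φ ε) (𝓝[>] 0) (𝓝 0) := by
  have hshift : Tendsto (fun ε ↦ a + ε) (𝓝[>] 0) (𝓝 a) :=
    tendsto_nhdsWithin_of_tendsto_nhds (Continuous.tendsto' (by fun_prop) 0 a (add_zero a))
  exact (hcont.tendsto.comp hshift).div_atTop hφ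

theorem tendsto_add_div_nhdsGT_zero (hφ : Tendsto φ (𝓝[>] 0) atTop)
    (hcont : ∀ t, 0 < t → ContinuousAt φ t) (ha : 0 ≤ a) :
    Tendsto (fun ε ↦ φ (a + ε) / φ ε) (𝓝[>] 0) (𝓝 (if a = 0 then 1 else 0)) := by
  rcases ha.eq_or_lt with rfl | ha
  · have hone : (fun ε ↦ φ (0 + ε) / φ ε) =ᶠ[𝓝[>] 0] fun _ ↦ 1 := by
      filter_upwards [hφ.eventually_ne_atTop 0] with ε hε
      rw [zero_add, div_self hε]
    simpa only [if_true] using tendsto_const_nhds.congr' hone.symm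
  · simpa only [ha.ne', if_false] using
      tendsto_add_div_nhdsGT_zero_of_continuousAt hφ (hcont a ha)

theorem tendsto_sum_add_div_nhdsGT_zero {ι : Type*} [Fintype ι] {a : ι → ℝ}
    (hφ : Tendsto φ (𝓝[>] 0) atTop) (hcont : ∀ t, 0 < t → ContinuousAt φ t)
    (ha : ∀ i, 0 ≤ a i) :
    Tendsto (fun ε ↦ (∑ i, φ (a i + ε)) / φ ε) (𝓝[>] 0)
      (𝓝 ((Finset.univ.filter fun i ↦ a i = 0).card : ℝ)) := by
  simpa only [Finset.sum_div, Finset.sum_boole] using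
    tendsto_finsetSum Finset.univ fun i _ ↦ tendsto_add_div_nhdsGT_zero hφ hcont (ha i)

end Blowup

section LogPow

variable {p q : ℝ}

theorem tendsto_add_rpow_nhdsGT_zero_of_pos (hq : 0 < q) :
    Tendsto (fun t : ℝ ↦ t + t ^ q) (𝓝[>] 0) (𝓝[>] 0) := by
  refine tendsto_nhdsWithin_of_tendsto_nhds_of_eventually_within _ ?_ ?_
  · refine tendsto_nhdsWithin_of_tendsto_nhds (Continuous.tendsto' ?_ 0 0 ?_)
    · exact continuous_id.add (Real.continuous_rpow_const hq.le)
    · rw [Real.zero_rpow hq.ne', add_zero]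
  · filter_upwards [self_mem_nhdsWithin] with t (ht : 0 < t)
    exact add_pos ht (Real.rpow_pos_of_pos ht q)

theorem tendsto_add_rpow_nhdsGT_zero_of_neg (hq : q < 0) :
    Tendsto (fun t : ℝ ↦ t + t ^ q) (𝓝[>] 0) atTop :=
  (tendsto_nhdsWithin_of_tendsto_nhds tendsto_id).add_atTop (tendsto_rpow_neg_nhdsGT_zero hq)

theorem tendsto_abs_log_add_rpow_nhdsGT_zero (hq : q ≠ 0) :
    Tendsto (fun t : ℝ ↦ |Real.log (t + t ^ q)|) (𝓝[>] 0) atTop := by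
  rcases hq.lt_or_gt with hq | hq
  · exact tendsto_abs_atTop_atTop.comp
      (Real.tendsto_log_atTop.comp (tendsto_add_rpow_nhdsGT_zero_of_neg hq))
  · exact tendsto_abs_atBot_atTop.comp
      (Real.tendsto_log_nhdsGT_zero.comp (tendsto_add_rpow_nhdsGT_zero_of_pos hq))

theorem continuousAt_abs_log_add_rpow_rpow (hp : 0 ≤ p) {t : ℝ} (ht : 0 < t) :
    ContinuousAt (fun t : ℝ ↦ |Real.log (t + t ^ q)| ^ p) t := by
  have hsum : ContinuousAt (fun t : ℝ ↦ t + t ^ q) t :=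
    continuousAt_id.add (Real.continuousAt_rpow_const t q (Or.inl ht.ne'))
  have hpos : 0 < t + t ^ q := add_pos ht (Real.rpow_pos_of_pos ht q)
  exact (hsum.log hpos.ne').abs.rpow_const (Or.inr hp)

end LogPow

theorem logpow_merit_tendsto_general {ι : Type*} [Fintype ι] {p q : ℝ} (hp : 0 < p)
    (hq : q ≠ 0) (x : ι → ℝ) :
    Tendsto
      (fun ε : ℝ ↦
        (∑ i, |Real.log (|x i| + ε + (|x i| + ε) ^ q)| ^ p) / |Real.log (ε + ε ^ q)| ^ p)
      (𝓝[>] 0)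
      (𝓝 ((Fintype.card ι : ℝ) - (Finset.univ.filter fun i ↦ x i ≠ 0).card)) := by
  have hcount : (Fintype.card ι : ℝ) - (Finset.univ.filter fun i ↦ x i ≠ 0).card =
      (Finset.univ.filter fun i ↦ |x i| = 0).card := by
    simp only [abs_eq_zero, sub_eq_iff_eq_add]
    exact_mod_cast (Finset.card_filter_add_card_filter_not fun i ↦ x i = 0).symm
  rw [hcount]
  exact tendsto_sum_add_div_nhdsGT_zero
    (φ := fun t ↦ |Real.log (t + t ^ q)| ^ p)
    ((tendsto_rpow_atTop hp).comp (tendsto_abs_log_add_rpow_nhdsGT_zero hq))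
    (fun _ ht ↦ continuousAt_abs_log_add_rpow_rpow hp.le ht) fun i ↦ abs_nonneg (x i)

/-- For fixed `p, q ∈ (0,1)` and `x ∈ ℝⁿ`,
`(∑ i, |log (|x i| + ε + (|x i| + ε)^q)|^p) / |log (ε + ε^q)|^p → n − ‖x‖₀`
as `ε → 0⁺`. -/
theorem logpow_merit_tendsto (n : ℕ) (p q : ℝ) (hp : p ∈ Set.Ioo (0 : ℝ) 1)
    (hq : q ∈ Set.Ioo (0 : ℝ) 1) (x : Fin n → ℝ) :
    Filter.Tendsto
      (fun ε : ℝ =>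
        (∑ i, |Real.log (|x i| + ε + (|x i| + ε) ^ q)| ^ p) /
          |Real.log (ε + ε ^ q)| ^ p)
      (nhdsWithin 0 (Set.Ioi 0))
      (nhds ((n : ℝ) - (Finset.univ.filter (fun i => x i ≠ 0)).card)) := by
  simpa only [Fintype.card_fin] using logpow_merit_tendsto_general hp.1 hq.1.ne' x
end
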